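/- ∫_{-∞}^{∞} x · log(1 + e^{2x}) / (1 + e^x) dx = (1/16) · (16·π·G + 2·π²·log 2 - 3·ζ(3)), where G := ∑_{n=0}^{∞} (-1)^n/(2n+1)² is the Catalan constant. -/

import Mathlib

/-!
Write `σ` for the sigmoid function, so that `1 / (1 + eˣ) = σ(-x)`. Since
`log (1 + e^{2x}) = ∫_{s > 0} 2 σ(2(x - s)) ds`, the integral equals
`∫_x ∫_{s > 0} x σ(-x) · 2 σ(2(x - s)) ds dx`, and the kernel has the sign of `x`, so Fubini applies
(`integrable_kernel`). For fixed `s`, partial fractions in `eˣ` give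
`2 σ(-2s) · (x (σ(2(x - s)) - σ(x)) + x eˣ / (1 + e^{2(x - s)}))`.

* Integrating by parts, `∫ x (σ(2(x - s)) - σ(x)) dx` is a difference of second moments of the
  logistic density `σ' = σ(x) σ(-x)`, whose variance is `π² / 3`; it equals `π² / 8 - s² / 2`.
* After translating by `s`, `∫ x eˣ / (1 + e^{2(x - s)}) dx` loses its odd part, and the rest is
  `s eˢ ∫ eʸ / (1 + e^{2y}) dy = s eˢ π / 2`.

The remaining integral over `s > 0` of `2 σ(-2s) (π² / 8 - s² / 2 + (π / 2) s eˢ)` has three terms: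
the first is `(π² / 8) log 2`, and expanding in powers of `e^{-s}` the other two are
`-(3 / 16) ζ(3)` and `π G`.
-/

open Real MeasureTheory

/-- The Catalan constant `G = ∑_{n=0}^∞ (-1)^n/(2n+1)²`. -/
noncomputable def catalanConstant : ℝ := ∑' n : ℕ, (-1) ^ n / (2 * (n : ℝ) + 1) ^ 2

open Set Filter Topology

/-! ### Dirichlet-type series and exponential decay -/

lemma integral_pow_mul_exp_Ioi (k : ℕ) {c : ℝ} (hc : 0 < c) :
    ∫ t in Ioi (0 : ℝ), t ^ k * exp (-(c * t)) = k.factorial / c ^ (k + 1) := by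
  have h := integral_rpow_mul_exp_neg_mul_Ioi (a := (k : ℝ) + 1) (by positivity) hc
  rw [Real.Gamma_nat_eq_factorial] at h
  simp only [add_sub_cancel_right, rpow_natCast] at h
  rw [h, ← Nat.cast_succ, rpow_natCast, one_div, inv_pow, mul_comm, ← div_eq_mul_inv]

lemma integrable_abs_pow_mul_exp (k : ℕ) {c : ℝ} (hc : 0 < c) :
    Integrable (fun x : ℝ => |x| ^ k * exp (-(c * |x|))) := by
  refine Integrable.of_integral_ne_zero ?_
  rw [integral_comp_abs (f := fun x => x ^ k * exp (-(c * x))), integral_pow_mul_exp_Ioi k hc]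
  positivity

lemma integrable_of_exp_bound {f : ℝ → ℝ} (hf : Continuous f) (C : ℝ) (k : ℕ) {c : ℝ} (hc : 0 < c)
    (h : ∀ x, |f x| ≤ C * (|x| ^ k * exp (-(c * |x|)))) : Integrable f :=
  ((integrable_abs_pow_mul_exp k hc).const_mul C).mono' hf.aestronglyMeasurable
    (Eventually.of_forall h)

/-- Termwise integration of a Dirichlet-type series `∑ aₙ e^{-pₙ t}` against `t ^ k`. -/
lemma hasSum_integral_pow_mul (k : ℕ) {a p : ℕ → ℝ} (hp : ∀ n, 0 < p n) {F : ℝ → ℝ}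
    (hF : ∀ t, 0 < t → HasSum (fun n => a n * exp (-(p n * t))) (F t))
    (hs : Summable fun n => |a n| / p n ^ (k + 1)) :
    HasSum (fun n => k.factorial * (a n / p n ^ (k + 1))) (∫ t in Ioi (0 : ℝ), t ^ k * F t) := by
  have hint (n : ℕ) : Integrable (fun t : ℝ => t ^ k * exp (-(p n * t)))
      (volume.restrict (Ioi 0)) := by
    refine Integrable.of_integral_ne_zero ?_
    rw [integral_pow_mul_exp_Ioi k (hp n)]
    have := hp n
    positivity
  have key := hasSum_integral_of_summable_integral_norm
    (F := fun n (t : ℝ) => a n * (t ^ k * exp (-(p n * t)))) (μ := volume.restrict (Ioi 0))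
    (fun n => (hint n).const_mul _) (by
      refine (hs.mul_left (k.factorial : ℝ)).congr fun n => ?_
      have : ∫ t in Ioi (0 : ℝ), ‖a n * (t ^ k * exp (-(p n * t)))‖
          = ∫ t in Ioi (0 : ℝ), |a n| * (t ^ k * exp (-(p n * t))) := by
        refine setIntegral_congr_fun measurableSet_Ioi fun t ht => ?_
        have ht : (0 : ℝ) < t := ht
        simp only [norm_mul, norm_eq_abs, abs_pow, abs_exp, abs_of_pos ht]
      rw [this, integral_const_mul, integral_pow_mul_exp_Ioi k (hp n)]
      ring)
  have e : ∫ t in Ioi (0 : ℝ), t ^ k * F t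
      = ∫ t in Ioi (0 : ℝ), ∑' n, a n * (t ^ k * exp (-(p n * t))) := by
    refine setIntegral_congr_fun measurableSet_Ioi fun t ht => ?_
    rw [← ((hF t ht).mul_left (t ^ k)).tsum_eq]
    exact tsum_congr fun n => by ring
  rw [e]
  refine key.congr_fun fun n => ?_
  rw [integral_const_mul, integral_pow_mul_exp_Ioi k (hp n)]
  ring

/-- The alternating zeta series: `η(k) = (1 - 2^{1-k}) ζ(k)`, by splitting into even and odd
indices. -/
lemma hasSum_alternating {k : ℕ} {S : ℝ} (hk : 1 < k)
    (h : HasSum (fun n : ℕ => 1 / (n : ℝ) ^ k) S) :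
    HasSum (fun n : ℕ => (-1 : ℝ) ^ n / ((n : ℝ) + 1) ^ k) ((1 - 2 / 2 ^ k) * S) := by
  have hk0 : k ≠ 0 := by omega
  have h1 : HasSum (fun n : ℕ => 1 / ((n : ℝ) + 1) ^ k) S := by
    have := (hasSum_nat_add_iff' 1).2 h
    simpa [hk0] using this
  have hodd : HasSum (fun n : ℕ => 1 / (((2 * n + 1 : ℕ) : ℝ) + 1) ^ k) (S / 2 ^ k) := by
    refine (h1.div_const (2 ^ k)).congr_fun fun n => ?_
    push_cast
    rw [show (2 * (n : ℝ) + 1 + 1) = (n + 1) * 2 by ring, mul_pow, div_div]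
  obtain ⟨T, hT⟩ : Summable (fun n : ℕ => 1 / (((2 * n : ℕ) : ℝ) + 1) ^ k) :=
    h1.summable.comp_injective (i := fun n : ℕ => 2 * n) fun a b hab => by simpa using hab
  have hTS : T + S / 2 ^ k = S :=
    (HasSum.even_add_odd (f := fun n : ℕ => 1 / ((n : ℝ) + 1) ^ k) hT hodd).unique h1
  have he : HasSum (fun n : ℕ => (-1 : ℝ) ^ (2 * n) / (((2 * n : ℕ) : ℝ) + 1) ^ k) T := by
    simpa [pow_mul] using hT
  have ho : HasSum (fun n : ℕ => (-1 : ℝ) ^ (2 * n + 1) / (((2 * n + 1 : ℕ) : ℝ) + 1) ^ k)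
      (-(S / 2 ^ k)) := by
    simpa [pow_mul, pow_succ, neg_div] using hodd.neg
  have h2 := HasSum.even_add_odd (f := fun n : ℕ => (-1 : ℝ) ^ n / ((n : ℝ) + 1) ^ k) he ho
  rwa [show T + -(S / 2 ^ k) = (1 - 2 / 2 ^ k) * S by linear_combination hTS] at h2

lemma sigmoid_le_exp (x : ℝ) : sigmoid x ≤ exp x := by
  have := sigmoid_mul_rexp_neg (-x)
  rw [neg_neg] at this
  rw [← this]
  exact mul_le_of_le_one_left (exp_pos x).le (sigmoid_le_one _)

lemma sigmoid_mul_sigmoid_neg_le (x : ℝ) : sigmoid x * sigmoid (-x) ≤ exp (-|x|) := by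
  rcases le_total 0 x with h | h
  · rw [abs_of_nonneg h]
    exact (mul_le_of_le_one_left (sigmoid_nonneg _) (sigmoid_le_one _)).trans (sigmoid_le_exp _)
  · rw [abs_of_nonpos h, neg_neg]
    exact (mul_le_of_le_one_right (sigmoid_nonneg _) (sigmoid_le_one _)).trans (sigmoid_le_exp _)

lemma hasDerivAt_sigmoid' (x : ℝ) : HasDerivAt sigmoid (sigmoid x * sigmoid (-x)) x := by
  rw [sigmoid_neg]
  exact hasDerivAt_sigmoid x

lemma norm_neg_exp_lt_one {t : ℝ} (ht : 0 < t) : ‖-exp (-t)‖ < 1 := by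
  rw [norm_neg, norm_eq_abs, abs_exp, exp_lt_one_iff]
  linarith

lemma sigmoid_neg_eq (t : ℝ) : sigmoid (-t) = exp (-t) / (1 + exp (-t)) := by
  rw [← sigmoid_mul_rexp_neg, sigmoid_def]
  field_simp

/-- The variance of the logistic distribution, from `σ(x) σ(-x) = ∑ (-1)ⁿ (n + 1) e^{-(n + 1) x}`
for `x > 0`. -/
lemma integral_sq_mul_sigmoid :
    ∫ x : ℝ, x ^ 2 * (sigmoid x * sigmoid (-x)) = π ^ 2 / 3 := by
  have hsum : HasSum (fun n : ℕ => ((2 : ℕ).factorial : ℝ) *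
      (((-1) ^ n * ((n : ℝ) + 1)) / ((n : ℝ) + 1) ^ (2 + 1)))
      (∫ t in Ioi (0 : ℝ), t ^ 2 * (sigmoid t * sigmoid (-t))) := by
    refine hasSum_integral_pow_mul 2 (fun n => by positivity) (fun t ht => ?_) ?_
    · have h := hasSum_coe_mul_geometric_of_norm_lt_one (norm_neg_exp_lt_one ht)
      have h := ((hasSum_nat_add_iff' 1).2 h).neg
      convert! h using 1
      · ext n
        rw [neg_pow (exp _), ← exp_nat_mul]
        push_cast
        rw [pow_succ, show -(((n : ℝ) + 1) * t) = (n + 1) * -t by ring]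
        ring
      · rw [sigmoid_neg_eq, sigmoid_def]
        simp
        field_simp
    · have := (summable_nat_add_iff 1).2 (Real.summable_one_div_nat_pow (p := 2)|>.2 (by norm_num))
      refine this.congr fun n => ?_
      have : (0 : ℝ) < n + 1 := by positivity
      rw [abs_mul, abs_of_pos this]
      push_cast
      simp
      field_simp
  have h2 := (hasSum_alternating (by norm_num) hasSum_zeta_two).mul_left 2
  have e : ∫ t in Ioi (0 : ℝ), t ^ 2 * (sigmoid t * sigmoid (-t)) = π ^ 2 / 6 := by
    refine hsum.unique ?_
    convert! h2 using 1
    · ext n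
      simp
      field_simp
    · ring
  have habs := integral_comp_abs (f := fun t => t ^ 2 * (sigmoid t * sigmoid (-t)))
  rw [e] at habs
  rw [show π ^ 2 / 3 = 2 * (π ^ 2 / 6) by ring, ← habs]
  congr 1
  ext x
  rcases abs_choice x with h | h <;> rw [h]
  rw [neg_neg]; ring

/-- Here `S = ζ(3)`, and `σ(-2t) = ∑ (-1)ⁿ e^{-2(n + 1) t}`. -/
lemma integral_sq_mul_sigmoid_two {S : ℝ} (hS : HasSum (fun n : ℕ => 1 / (n : ℝ) ^ 3) S) :
    ∫ t in Ioi (0 : ℝ), t ^ 2 * sigmoid (-(2 * t)) = 3 / 16 * S := by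
  have hsum : HasSum (fun n : ℕ => ((2 : ℕ).factorial : ℝ) *
      ((-1) ^ n / (2 * ((n : ℝ) + 1)) ^ (2 + 1)))
      (∫ t in Ioi (0 : ℝ), t ^ 2 * sigmoid (-(2 * t))) := by
    refine hasSum_integral_pow_mul 2 (fun n => by positivity) (fun t ht => ?_) ?_
    · have h := (hasSum_geometric_of_norm_lt_one
        (norm_neg_exp_lt_one (t := 2 * t) (by positivity))).mul_left (exp (-(2 * t)))
      convert! h using 1
      · ext n
        rw [neg_pow (exp _), ← exp_nat_mul, mul_left_comm, ← exp_add]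
        ring_nf
      · rw [sigmoid_neg_eq]
        simp
        field_simp
    · have := (summable_nat_add_iff 1).2 (Real.summable_one_div_nat_pow (p := 3)|>.2 (by norm_num))
      refine (this.mul_left (1 / 8)).congr fun n => ?_
      push_cast
      simp [mul_pow]
      field_simp
      norm_num
  refine hsum.unique ?_
  convert! (hasSum_alternating (by norm_num) hS).mul_left (1 / 4) using 1
  · ext n
    simp
    field_simp
    norm_num
  · ring

lemma integral_mul_sech :
    ∫ t in Ioi (0 : ℝ), t ^ 1 * (exp (-t) / (1 + exp (-(2 * t)))) = catalanConstant := by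
  have hsum : HasSum (fun n : ℕ => ((1 : ℕ).factorial : ℝ) *
      ((-1) ^ n / (2 * (n : ℝ) + 1) ^ (1 + 1)))
      (∫ t in Ioi (0 : ℝ), t ^ 1 * (exp (-t) / (1 + exp (-(2 * t))))) := by
    refine hasSum_integral_pow_mul 1 (fun n => by positivity) (fun t ht => ?_) ?_
    · have h := (hasSum_geometric_of_norm_lt_one
        (norm_neg_exp_lt_one (t := 2 * t) (by positivity))).mul_left (exp (-t))
      convert! h using 1
      · ext n
        rw [neg_pow (exp _), ← exp_nat_mul, mul_left_comm, ← exp_add]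
        ring_nf
      · simp
        field_simp
    · have := (Real.summable_one_div_nat_pow (p := 2)|>.2 (by norm_num)).comp_injective
        (i := fun n : ℕ => 2 * n + 1) fun a b hab => by simpa using hab
      refine this.congr fun n => ?_
      simp
  rw [catalanConstant, ← hsum.tsum_eq]
  simp

/-! ### The integral over `x` -/

lemma integrable_pow_mul_sigmoid (k : ℕ) :
    Integrable fun x : ℝ => x ^ k * (sigmoid x * sigmoid (-x)) := by
  refine integrable_of_exp_bound (by fun_prop) 1 k one_pos fun x => ?_
  have h0 : 0 ≤ sigmoid x * sigmoid (-x) := mul_nonneg (sigmoid_nonneg _) (sigmoid_nonneg _)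
  rw [abs_mul, abs_pow, abs_of_nonneg h0, one_mul, one_mul]
  gcongr
  exact sigmoid_mul_sigmoid_neg_le x

lemma integral_sigmoid_mul : ∫ x : ℝ, sigmoid x * sigmoid (-x) = 1 := by
  have := integral_of_hasDerivAt_of_tendsto hasDerivAt_sigmoid'
    (by simpa using integrable_pow_mul_sigmoid 0) tendsto_sigmoid_atBot tendsto_sigmoid_atTop
  simpa using this

lemma integral_eq_zero_of_odd {f : ℝ → ℝ} (hf : ∀ x, f (-x) = -f x) : ∫ x, f x = 0 := by
  have h := integral_neg_eq_self f volume
  simp only [hf, integral_neg] at h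
  linarith

/-- The second moment of the logistic density after `x ↦ 2 (x - s)`, from its first three
moments `1, 0, π² / 3`. -/
lemma integral_sq_mul_shift (s : ℝ) :
    Integrable (fun x : ℝ => x ^ 2 * (2 * (sigmoid (2 * (x - s)) * sigmoid (-(2 * (x - s)))))) ∧
    ∫ x : ℝ, x ^ 2 * (2 * (sigmoid (2 * (x - s)) * sigmoid (-(2 * (x - s)))))
      = π ^ 2 / 12 + s ^ 2 := by
  let g : ℝ → ℝ := fun y => (y / 2 + s) ^ 2 * (2 * (sigmoid y * sigmoid (-y)))
  have hg : g = fun y => (1 / 2) * (y ^ 2 * (sigmoid y * sigmoid (-y)))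
      + (2 * s * (y ^ 1 * (sigmoid y * sigmoid (-y)))
        + 2 * s ^ 2 * (y ^ 0 * (sigmoid y * sigmoid (-y)))) := by
    ext y; simp only [g]; ring
  have i (k : ℕ) := integrable_pow_mul_sigmoid k
  have i10 : Integrable fun y : ℝ => 2 * s * (y ^ 1 * (sigmoid y * sigmoid (-y)))
      + 2 * s ^ 2 * (y ^ 0 * (sigmoid y * sigmoid (-y))) :=
    ((i 1).const_mul _).add ((i 0).const_mul _)
  have hgi : Integrable g := by
    rw [hg]
    exact ((i 2).const_mul _).add i10
  have hgv : ∫ y, g y = π ^ 2 / 6 + 2 * s ^ 2 := by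
    rw [hg, integral_add ((i 2).const_mul _) i10,
      integral_add ((i 1).const_mul _) ((i 0).const_mul _), integral_const_mul, integral_const_mul,
      integral_const_mul, integral_sq_mul_sigmoid,
      integral_eq_zero_of_odd (f := fun y => y ^ 1 * (sigmoid y * sigmoid (-y)))
        (fun y => by rw [neg_neg]; ring)]
    simp only [pow_zero, one_mul]
    rw [integral_sigmoid_mul]
    ring
  have e : (fun x : ℝ => x ^ 2 * (2 * (sigmoid (2 * (x - s)) * sigmoid (-(2 * (x - s))))))
      = fun x => g (2 * (x - s)) := by
    ext x; simp only [g]; congr 2; ring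
  rw [e]
  refine ⟨((hgi.comp_mul_left' two_ne_zero).comp_sub_right s), ?_⟩
  rw [integral_sub_right_eq_self (fun x => g (2 * x)) s, Measure.integral_comp_mul_left, hgv,
    abs_of_pos (by norm_num), smul_eq_mul]
  ring

/-- The two sigmoids agree to exponential order at both ends, although neither is small at `+∞`;
this makes `integral_mul_sub` converge. -/
lemma abs_sigmoid_sub_le {s : ℝ} (hs : 0 < s) (x : ℝ) :
    |sigmoid (2 * (x - s)) - sigmoid x| ≤ (exp (2 * s) + 1) * exp (-(1 * |x|)) := by
  rw [one_mul]
  rcases le_total 0 x with h | h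
  · rw [abs_of_nonneg h]
    have h1 := sigmoid_neg (2 * (x - s))
    have h2 := sigmoid_neg x
    have h3 := sigmoid_le_exp (-(2 * (x - s)))
    have h4 := sigmoid_le_exp (-x)
    have h5 : exp (-(2 * (x - s))) ≤ exp (2 * s) * exp (-x) := by
      rw [← exp_add]; exact exp_le_exp.2 (by linarith)
    have h6 := sigmoid_nonneg (-(2 * (x - s)))
    have h7 := sigmoid_nonneg (-x)
    have h8 := mul_pos (exp_pos (2 * s)) (exp_pos (-x))
    have h9 := exp_pos (-x)
    rw [abs_le]
    constructor <;> linarith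
  · rw [abs_of_nonpos h, neg_neg]
    have h3 := sigmoid_le_exp (2 * (x - s))
    have h4 := sigmoid_le_exp x
    have h5 : exp (2 * (x - s)) ≤ exp (2 * s) * exp x := by
      rw [← exp_add]; exact exp_le_exp.2 (by linarith)
    have h6 := sigmoid_nonneg (2 * (x - s))
    have h7 := sigmoid_nonneg x
    have h8 := mul_pos (exp_pos (2 * s)) (exp_pos x)
    have h9 := exp_pos x
    rw [abs_le]
    constructor <;> linarith

lemma integrable_pow_mul_sub {s : ℝ} (hs : 0 < s) (k : ℕ) :
    Integrable fun x : ℝ => x ^ k * (sigmoid (2 * (x - s)) - sigmoid x) := by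
  refine integrable_of_exp_bound (by fun_prop) (exp (2 * s) + 1) k one_pos fun x => ?_
  rw [abs_mul, abs_pow, mul_left_comm]
  gcongr
  exact abs_sigmoid_sub_le hs x

/-- Integration by parts against `x ^ 2 / 2` turns this integral into a difference of second moments
of logistic densities. -/
lemma integral_mul_sub {s : ℝ} (hs : 0 < s) :
    ∫ x : ℝ, x * (sigmoid (2 * (x - s)) - sigmoid x) = π ^ 2 / 8 - s ^ 2 / 2 := by
  obtain ⟨hi, hv⟩ := integral_sq_mul_shift s
  have i2 := integrable_pow_mul_sigmoid 2
  have hparts := integral_mul_deriv_eq_deriv_mul_of_integrable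
    (u := fun x : ℝ => x ^ 2 / 2) (u' := fun x => x)
    (v := fun x => sigmoid (2 * (x - s)) - sigmoid x)
    (v' := fun x => 2 * (sigmoid (2 * (x - s)) * sigmoid (-(2 * (x - s))))
      - sigmoid x * sigmoid (-x))
    (fun x _ => by
      have := (hasDerivAt_pow 2 x).div_const 2
      simpa using this)
    (fun x _ => by
      have h := (hasDerivAt_sigmoid' (2 * (x - s))).comp x
        (((hasDerivAt_id x).sub_const s).const_mul 2)
      refine (h.sub (hasDerivAt_sigmoid' x)).congr_deriv ?_
      ring)
    (by
      refine ((hi.sub i2).const_mul (1 / 2)).congr (Eventually.of_forall fun x => ?_)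
      simp only [Pi.sub_apply, Pi.mul_apply]; ring)
    (by
      refine (integrable_pow_mul_sub hs 1).congr (Eventually.of_forall fun x => ?_)
      simp only [Pi.mul_apply, pow_one])
    (by
      refine ((integrable_pow_mul_sub hs 2).const_mul (1 / 2)).congr
        (Eventually.of_forall fun x => ?_)
      simp only [Pi.mul_apply]; ring)
  have e : ∫ x : ℝ, x ^ 2 / 2 * (2 * (sigmoid (2 * (x - s)) * sigmoid (-(2 * (x - s))))
      - sigmoid x * sigmoid (-x)) = 1 / 2 * ((π ^ 2 / 12 + s ^ 2) - π ^ 2 / 3) := by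
    rw [← hv, ← integral_sq_mul_sigmoid, ← integral_sub hi i2, ← integral_const_mul]
    congr 1; ext x; ring
  rw [e] at hparts
  linarith

lemma exp_div_eq (x : ℝ) : exp x / (1 + exp (2 * x)) = exp (-x) / (1 + exp (2 * -x)) := by
  rw [div_eq_div_iff (by positivity) (by positivity), mul_add, mul_add, ← exp_add, ← exp_add]
  ring_nf

lemma exp_div_le (x : ℝ) : exp x / (1 + exp (2 * x)) ≤ exp (-|x|) := by
  have key (y : ℝ) : exp y / (1 + exp (2 * y)) ≤ exp y :=
    div_le_self (exp_pos _).le (by linarith [exp_pos (2 * y)])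
  rcases le_total 0 x with h | h
  · rw [abs_of_nonneg h, exp_div_eq]; exact key _
  · rw [abs_of_nonpos h, neg_neg]; exact key _

lemma integrable_pow_mul_exp_div (k : ℕ) :
    Integrable fun x : ℝ => x ^ k * (exp x / (1 + exp (2 * x))) := by
  refine integrable_of_exp_bound
    (by fun_prop (disch := intro x; positivity)) 1 k one_pos fun x => ?_
  have h0 : 0 ≤ exp x / (1 + exp (2 * x)) := by positivity
  rw [abs_mul, abs_pow, abs_of_nonneg h0, one_mul, one_mul]
  gcongr
  exact exp_div_le x

/-- `arctan (exp x)` is an antiderivative of the integrand, which is `1 / (2 cosh x)`. -/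
lemma integral_exp_div : ∫ x : ℝ, exp x / (1 + exp (2 * x)) = π / 2 := by
  have h := integral_of_hasDerivAt_of_tendsto (f := fun x => arctan (exp x))
    (f' := fun x => exp x / (1 + exp (2 * x))) (m := 0) (n := π / 2)
    (fun x => by
      refine (hasDerivAt_exp x).arctan.congr_deriv ?_
      rw [← exp_nat_mul]; push_cast; ring)
    (by simpa using integrable_pow_mul_exp_div 0)
    (by simpa [Function.comp_def] using (continuous_arctan.tendsto 0).comp tendsto_exp_atBot)
    ((tendsto_arctan_atTop.mono_right nhdsWithin_le_nhds).comp tendsto_exp_atTop)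
  simpa using h

lemma integral_mul_exp_div (s : ℝ) :
    Integrable (fun x : ℝ => x * (exp x / (1 + exp (2 * (x - s))))) ∧
    ∫ x : ℝ, x * (exp x / (1 + exp (2 * (x - s)))) = π / 2 * (s * exp s) := by
  let g : ℝ → ℝ := fun y => exp s * (y ^ 1 * (exp y / (1 + exp (2 * y))))
    + exp s * s * (y ^ 0 * (exp y / (1 + exp (2 * y))))
  have i (k : ℕ) := integrable_pow_mul_exp_div k
  have hgi : Integrable g := ((i 1).const_mul _).add ((i 0).const_mul _)
  have e : (fun x : ℝ => x * (exp x / (1 + exp (2 * (x - s))))) = fun x => g (x - s) := by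
    ext x
    have : exp x = exp s * exp (x - s) := by rw [← exp_add]; ring_nf
    simp only [g]
    rw [this]
    ring
  rw [e]
  refine ⟨hgi.comp_sub_right s, ?_⟩
  rw [integral_sub_right_eq_self g s]
  simp only [g]
  rw [integral_add ((i 1).const_mul _) ((i 0).const_mul _), integral_const_mul, integral_const_mul,
    integral_eq_zero_of_odd (f := fun y => y ^ 1 * (exp y / (1 + exp (2 * y))))
        (fun y => by rw [← exp_div_eq]; ring)]
  simp only [pow_zero, one_mul]
  rw [integral_exp_div]
  ring

/-- With `t = exp x` and `b = exp (-2s)` this is the decomposition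
`b t² / ((1 + t) (1 + b t²)) = b / (1 + b) * (b t² / (1 + b t²) - t / (1 + t) + t / (1 + b t²))`. -/
lemma partial_fractions (x s : ℝ) :
    x * sigmoid (-x) * (2 * sigmoid (2 * (x - s))) = 2 * sigmoid (-(2 * s)) *
      (x * (sigmoid (2 * (x - s)) - sigmoid x) + x * (exp x / (1 + exp (2 * (x - s))))) := by
  have h1 : sigmoid x = exp x / (1 + exp x) := by simpa using sigmoid_neg_eq (-x)
  have h2 : sigmoid (-x) = 1 / (1 + exp x) := by rw [sigmoid_def, neg_neg, one_div]
  have h3 : sigmoid (2 * (x - s)) = exp (2 * (x - s)) / (1 + exp (2 * (x - s))) := by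
    simpa only [neg_neg] using sigmoid_neg_eq (-(2 * (x - s)))
  have h4 : exp (2 * (x - s)) = exp x ^ 2 * exp (-(2 * s)) := by
    rw [← exp_nat_mul, ← exp_add]; push_cast; ring_nf
  rw [h1, h2, h3, sigmoid_neg_eq, h4]
  have := exp_pos x
  have := exp_pos (-(2 * s))
  field_simp
  ring

/-- The integral over `x` of the two-variable kernel. -/
lemma integral_kernel_left {s : ℝ} (hs : 0 < s) :
    ∫ x : ℝ, x * sigmoid (-x) * (2 * sigmoid (2 * (x - s))) = 2 * sigmoid (-(2 * s)) *
      (π ^ 2 / 8 - s ^ 2 / 2 + π / 2 * (s * exp s)) := by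
  obtain ⟨hi, hv⟩ := integral_mul_exp_div s
  simp_rw [partial_fractions]
  rw [integral_const_mul, integral_add (by simpa using integrable_pow_mul_sub hs 1) hi,
    integral_mul_sub hs, hv]

/-! ### Exchanging the integrals -/

/-- The logarithm as an integral of sigmoids, since
`2 σ(2 (x - s)) = -d/ds log (1 + e^{2 (x - s)})`. -/
lemma integral_sigmoid_shift (x : ℝ) :
    IntegrableOn (fun s => 2 * sigmoid (2 * (x - s))) (Ioi 0) ∧
    ∫ s in Ioi (0 : ℝ), 2 * sigmoid (2 * (x - s)) = log (1 + exp (2 * x)) := by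
  have hd (s : ℝ) (_ : s ∈ Ici (0 : ℝ)) :
      HasDerivAt (fun s => -log (1 + exp (2 * (x - s)))) (2 * sigmoid (2 * (x - s))) s := by
    have h := ((((hasDerivAt_id s).const_sub x).const_mul 2).exp.const_add 1).log
      (by positivity)
    refine h.neg.congr_deriv ?_
    have h3 : sigmoid (2 * (x - s)) = exp (2 * (x - s)) / (1 + exp (2 * (x - s))) := by
      simpa only [neg_neg] using sigmoid_neg_eq (-(2 * (x - s)))
    rw [h3]
    simp only [id]
    ring
  have hpos (s : ℝ) (_ : s ∈ Ioi (0 : ℝ)) : 0 ≤ 2 * sigmoid (2 * (x - s)) :=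
    mul_nonneg zero_le_two (sigmoid_nonneg _)
  have ht : Tendsto (fun s => -log (1 + exp (2 * (x - s)))) atTop (𝓝 0) := by
    have h1 : Tendsto (fun s : ℝ => 2 * (x - s)) atTop atBot :=
      (tendsto_const_nhds.add_atBot tendsto_neg_atTop_atBot).const_mul_atBot two_pos
    have h2 := (tendsto_exp_atBot.comp h1).const_add 1
    have h3 := (h2.log (by norm_num)).neg
    simpa using h3
  refine ⟨integrableOn_Ioi_deriv_of_nonneg' hd hpos ht, ?_⟩
  rw [integral_Ioi_of_hasDerivAt_of_nonneg' hd hpos ht]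
  simp

/-- With `u = exp (x / 2)`: `log (1 + u⁴) ≤ log ((1 + u)⁴) ≤ 4 u`. The exponent `x / 2` leaves room
for the decay `exp (-x)` of the other factor at `+∞`, while still giving decay at `-∞`. -/
lemma log_one_add_exp_le (x : ℝ) : log (1 + exp (2 * x)) ≤ 4 * exp (x / 2) := by
  have hx : exp (2 * x) = exp (x / 2) ^ 4 := by rw [← exp_nat_mul]; push_cast; ring_nf
  have hp := exp_pos (x / 2)
  calc log (1 + exp (2 * x)) ≤ log ((1 + exp (x / 2)) ^ 4) := by
        apply log_le_log (by positivity)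
        rw [hx]
        nlinarith [pow_pos hp 2, pow_pos hp 3]
    _ = 4 * log (1 + exp (x / 2)) := by rw [log_pow]; norm_num
    _ ≤ 4 * exp (x / 2) := by
        have := log_le_sub_one_of_pos (x := 1 + exp (x / 2)) (by positivity)
        linarith

lemma integrable_integrand :
    Integrable fun x : ℝ => x * sigmoid (-x) * log (1 + exp (2 * x)) := by
  refine integrable_of_exp_bound
    (by fun_prop (disch := intro x; positivity)) 4 1 (c := 1 / 2) (by norm_num) fun x => ?_
  have hl : 0 ≤ log (1 + exp (2 * x)) := log_nonneg (by linarith [exp_pos (2 * x)])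
  have h1 : sigmoid (-x) * exp (x / 2) ≤ exp (-(1 / 2 * |x|)) := by
    rcases le_total 0 x with h | h
    · rw [abs_of_nonneg h]
      calc _ ≤ exp (-x) * exp (x / 2) := by gcongr; exact sigmoid_le_exp _
        _ = _ := by rw [← exp_add]; ring_nf
    · rw [abs_of_nonpos h]
      calc _ ≤ 1 * exp (x / 2) := by gcongr; exact sigmoid_le_one _
        _ = _ := by rw [one_mul]; ring_nf
  rw [abs_mul, abs_mul, abs_of_nonneg (sigmoid_nonneg _), abs_of_nonneg hl, pow_one]
  calc |x| * sigmoid (-x) * log (1 + exp (2 * x))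
      ≤ |x| * sigmoid (-x) * (4 * exp (x / 2)) := by
        gcongr
        · exact mul_nonneg (abs_nonneg x) (sigmoid_nonneg _)
        · exact log_one_add_exp_le x
    _ = 4 * (|x| * (sigmoid (-x) * exp (x / 2))) := by ring
    _ ≤ _ := by gcongr

/-- The kernel has the sign of `x`, so its norm integrates over `s` to the norm of the original
integrand. -/
lemma integrable_kernel : Integrable
    (Function.uncurry fun x s : ℝ => x * sigmoid (-x) * (2 * sigmoid (2 * (x - s))))
    (volume.prod (volume.restrict (Ioi 0))) := by
  have hc : Continuous
      (Function.uncurry fun x s : ℝ => x * sigmoid (-x) * (2 * sigmoid (2 * (x - s)))) := by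
    unfold Function.uncurry
    fun_prop
  rw [integrable_prod_iff hc.aestronglyMeasurable]
  refine ⟨Eventually.of_forall fun x =>
    (integral_sigmoid_shift x).1.const_mul (x * sigmoid (-x)), ?_⟩
  refine integrable_integrand.norm.congr (Eventually.of_forall fun x => ?_)
  have hl : 0 ≤ log (1 + exp (2 * x)) := log_nonneg (by linarith [exp_pos (2 * x)])
  simp only [Function.uncurry, norm_mul (x * sigmoid (-x))]
  rw [integral_const_mul, norm_of_nonneg hl, ← (integral_sigmoid_shift x).2]
  congr 2
  ext s
  exact (norm_of_nonneg (mul_nonneg zero_le_two (sigmoid_nonneg _))).symm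

/-- The evaluation over the reals, with `S = ζ(3)`. -/
lemma integral_real {S : ℝ} (hS : HasSum (fun n : ℕ => 1 / (n : ℝ) ^ 3) S) :
    ∫ x : ℝ, x * log (1 + exp (2 * x)) / (1 + exp x)
      = π * catalanConstant + π ^ 2 / 8 * log 2 - 3 / 16 * S := by
  have h1 : ∫ x : ℝ, x * log (1 + exp (2 * x)) / (1 + exp x)
      = ∫ x : ℝ, ∫ s in Ioi (0 : ℝ), x * sigmoid (-x) * (2 * sigmoid (2 * (x - s))) := by
    congr 1
    ext x
    rw [integral_const_mul, (integral_sigmoid_shift x).2, sigmoid_def, neg_neg]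
    ring
  obtain ⟨iA, vA⟩ := integral_sigmoid_shift 0
  have vB := integral_sq_mul_sigmoid_two hS
  have iB : IntegrableOn (fun t : ℝ => t ^ 2 * sigmoid (-(2 * t))) (Ioi 0) := by
    refine Integrable.of_integral_ne_zero ?_
    rw [vB]
    -- `S ≥ 1`, its term at `n = 1`, so the integral is not the junk value `0`
    have := hS.tsum_eq ▸ hS.summable.sum_le_tsum {1} (fun n _ => by positivity)
    norm_num at this
    linarith
  have vC := integral_mul_sech
  have iC : IntegrableOn (fun t : ℝ => t ^ 1 * (exp (-t) / (1 + exp (-(2 * t))))) (Ioi 0) := by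
    refine (integrable_pow_mul_exp_div 1).integrableOn.congr_fun (fun t _ => ?_) measurableSet_Ioi
    simp only [exp_div_eq t, mul_neg]
  have h2 : ∀ s ∈ Ioi (0 : ℝ), ∫ x : ℝ, x * sigmoid (-x) * (2 * sigmoid (2 * (x - s)))
      = (π ^ 2 / 8 * (2 * sigmoid (2 * (0 - s))) - s ^ 2 * sigmoid (-(2 * s)))
        + π * (s ^ 1 * (exp (-s) / (1 + exp (-(2 * s))))) := by
    intro s hs
    have h3 : sigmoid (-(2 * s)) * exp s = exp (-s) / (1 + exp (-(2 * s))) := by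
      rw [sigmoid_neg_eq, div_mul_eq_mul_div, ← exp_add]
      ring_nf
    rw [integral_kernel_left hs, ← h3, show 2 * (0 - s) = -(2 * s) by ring]
    ring
  have iAB : IntegrableOn (fun s => π ^ 2 / 8 * (2 * sigmoid (2 * (0 - s)))
      - s ^ 2 * sigmoid (-(2 * s))) (Ioi 0) := (iA.const_mul _).sub iB
  rw [h1, integral_integral_swap integrable_kernel, setIntegral_congr_fun measurableSet_Ioi h2,
    integral_add iAB (iC.const_mul _), integral_sub (iA.const_mul _) iB,
    integral_const_mul, vA, vB, integral_const_mul, vC]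
  norm_num
  ring

/-- `∫_{-∞}^∞ x·log(1+e^{2x})/(1+e^x) dx = (1/16)·(16πG + 2π²·log 2 - 3ζ(3))`,
where `G` is the Catalan constant. -/
theorem integral_x_log_exp_two :
    ((∫ x : ℝ, x * Real.log (1 + Real.exp (2 * x)) / (1 + Real.exp x) : ℝ) : ℂ) =
      1 / 16 * (16 * (π : ℂ) * (catalanConstant : ℂ) +
        2 * (π : ℂ) ^ 2 * (Real.log 2 : ℂ) - 3 * riemannZeta 3) := by
  have hS := (Real.summable_one_div_nat_pow (p := 3) |>.2 (by norm_num)).hasSum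
  have hz : riemannZeta 3 = ((∑' n : ℕ, 1 / (n : ℝ) ^ 3 : ℝ) : ℂ) := by
    have := zeta_nat_eq_tsum_of_gt_one (k := 3) (by norm_num)
    push_cast at this ⊢
    exact this
  rw [hz, integral_real hS]
  push_cast
  ring
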